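/- arXiv:2201.09859 — 3 statements merged into one kernel-verified Lean document; each statement's English description precedes it below -/
import Mathlib

section
/- Let m, F, G, K be positive integers, H an m×m real matrix (graph shift operator), Y an m×F real matrix (graph signal), and Ψ_k ∈ ℝ^{F×G} for k = 0,…,K−1 a family of filter taps. For any permutation σ of Fin m with permutation matrix P_σ, the graph convolution of the permuted data equals the permutation of the original graph convolution: Σ_{k=0}^{K−1} (P_σ H P_σᵀ)^k (P_σ Y) Ψ_k = P_σ (Σ_{k=0}^{K−1} H^k Y Ψ_k). -/
open Matrix

/-- The permutation matrix of `σ`: entry `(i, j)` is `1` if `j = σ i` and `0` otherwise. -/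
def permMat {m : ℕ} (σ : Equiv.Perm (Fin m)) : Matrix (Fin m) (Fin m) ℝ :=
  fun i j => if j = σ i then 1 else 0

/-- Permutation equivariance of the graph convolution: for a graph shift operator `H`,
a graph signal `Y` and filter taps `Ψ k`, `k = 0, …, K-1`,
`Σ_{k<K} (P_σ H P_σᵀ)^k (P_σ Y) Ψ_k = P_σ (Σ_{k<K} H^k Y Ψ_k)`. -/
theorem graphConv_perm_equivariant {m F G K : ℕ} (hm : 0 < m) (hF : 0 < F) (hG : 0 < G)
    (hK : 0 < K) (H : Matrix (Fin m) (Fin m) ℝ) (Y : Matrix (Fin m) (Fin F) ℝ)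
    (Ψ : ℕ → Matrix (Fin F) (Fin G) ℝ) (σ : Equiv.Perm (Fin m)) :
    ∑ k ∈ Finset.range K, (permMat σ * H * (permMat σ)ᵀ) ^ k * (permMat σ * Y) * Ψ k
      = permMat σ * ∑ k ∈ Finset.range K, H ^ k * Y * Ψ k := by
  have hP : (permMat σ)ᵀ * permMat σ = 1 := by
    ext i j
    rw [Matrix.mul_apply, Matrix.one_apply, ← Equiv.sum_comp σ.symm]
    simp [permMat, Matrix.transpose_apply, eq_comm]
  have hk : ∀ k : ℕ, (permMat σ * H * (permMat σ)ᵀ) ^ k * permMat σ = permMat σ * H ^ k := by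
    intro k
    induction k with
    | zero => simp
    | succ n ih =>
      rw [pow_succ, Matrix.mul_assoc, Matrix.mul_assoc (permMat σ * H), hP, Matrix.mul_one,
        ← Matrix.mul_assoc, ih, Matrix.mul_assoc, ← pow_succ]
  rw [Matrix.mul_sum]
  refine Finset.sum_congr rfl fun k _ => ?_
  rw [← Matrix.mul_assoc, hk]
  simp only [Matrix.mul_assoc]
end

section
/- (Permutation equivariance of random-edge GNNs.) Let m, L be positive integers, F_0,…,F_L positive integers (feature dimensions), and for each layer l = 1,…,L let K_l be a positive integer (filter length), Ψ_{l,k} ∈ ℝ^{F_{l−1}×F_l} for k = 0,…,K_l−1 filter taps, and φ_l : ℝ → ℝ a function applied entrywise. Given an m×m real matrix H and an m×F_0 real matrix Z, define the GNN output recursively by Y_0(H,Z) = Z and Y_l(H,Z) = φ_l applied entrywise to Σ_{k=0}^{K_l−1} H^k Y_{l−1}(H,Z) Ψ_{l,k}. Then for any permutation σ of Fin m with permutation matrix P_σ, the output on the permuted inputs equals the permuted output: Y_L(P_σ H P_σᵀ, P_σ Z) = P_σ Y_L(H, Z). -/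
open Matrix

/-- The output of layer `l` of a GNN with feature dimensions `Fdim`, filter lengths `K`,
filter taps `Ψ` (with `Ψ l k ∈ ℝ^{Fdim l × Fdim (l+1)}` the `k`-th tap of layer `l + 1`)
and entrywise nonlinearities `φ`, run on graph shift operator `H` with input signal `Z`:
`Y_0 = Z` and `Y_{l+1} = φ_{l+1}(Σ_{k < K (l+1)} H^k Y_l Ψ_{l+1,k})` entrywise. -/
noncomputable def gnnOut {m : ℕ} (Fdim : ℕ → ℕ) (K : ℕ → ℕ)
    (Ψ : (l : ℕ) → ℕ → Matrix (Fin (Fdim l)) (Fin (Fdim (l + 1))) ℝ)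
    (φ : ℕ → ℝ → ℝ)
    (H : Matrix (Fin m) (Fin m) ℝ) (Z : Matrix (Fin m) (Fin (Fdim 0)) ℝ) :
    (l : ℕ) → Matrix (Fin m) (Fin (Fdim l)) ℝ
  | 0 => Z
  | l + 1 =>
      (∑ k ∈ Finset.range (K (l + 1)), H ^ k * gnnOut Fdim K Ψ φ H Z l * Ψ l k).map (φ (l + 1))

theorem permMat_mul_eq {m n : ℕ} (σ : Equiv.Perm (Fin m)) (M : Matrix (Fin m) (Fin n) ℝ)
    (i : Fin m) (j : Fin n) : (permMat σ * M) i j = M (σ i) j := by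
  simp [Matrix.mul_apply, permMat]

theorem permMat_tr_mul {m : ℕ} (σ : Equiv.Perm (Fin m)) :
    (permMat σ)ᵀ * permMat σ = 1 := by
  apply mul_eq_one_comm.mp
  ext i j
  rw [permMat_mul_eq]
  simp [permMat, Matrix.one_apply]

theorem permMat_pow {m : ℕ} (σ : Equiv.Perm (Fin m)) (H : Matrix (Fin m) (Fin m) ℝ) (k : ℕ) :
    (permMat σ * H * (permMat σ)ᵀ) ^ k * permMat σ = permMat σ * H ^ k := by
  induction k with
  | zero => simp
  | succ k ih =>
    rw [pow_succ, Matrix.mul_assoc, Matrix.mul_assoc (permMat σ * H), permMat_tr_mul,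
      Matrix.mul_one, ← Matrix.mul_assoc, ih, Matrix.mul_assoc, ← pow_succ]

/-- Permutation equivariance of (random edge) graph neural networks: the `L`-layer GNN
output on the permuted inputs `(P_σ H P_σᵀ, P_σ Z)` equals the permutation of the GNN
output on `(H, Z)`. -/
theorem gnn_perm_equivariant {m L : ℕ} (hm : 0 < m) (hL : 0 < L)
    (Fdim : ℕ → ℕ) (hFdim : ∀ l, 0 < Fdim l) (K : ℕ → ℕ) (hK : ∀ l, 0 < K l)
    (Ψ : (l : ℕ) → ℕ → Matrix (Fin (Fdim l)) (Fin (Fdim (l + 1))) ℝ)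
    (φ : ℕ → ℝ → ℝ)
    (H : Matrix (Fin m) (Fin m) ℝ) (Z : Matrix (Fin m) (Fin (Fdim 0)) ℝ)
    (σ : Equiv.Perm (Fin m)) :
    gnnOut Fdim K Ψ φ (permMat σ * H * (permMat σ)ᵀ) (permMat σ * Z) L
      = permMat σ * gnnOut Fdim K Ψ φ H Z L := by
  clear hL
  induction L with
  | zero => rfl
  | succ l ih =>
    simp only [gnnOut]
    rw [ih]
    have h : ∀ k, (permMat σ * H * (permMat σ)ᵀ) ^ k * (permMat σ * gnnOut Fdim K Ψ φ H Z l) * Ψ l k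
        = permMat σ * (H ^ k * gnnOut Fdim K Ψ φ H Z l * Ψ l k) := by
      intro k
      rw [← Matrix.mul_assoc, permMat_pow]
      simp only [Matrix.mul_assoc]
    simp only [h]
    rw [← Matrix.mul_sum]
    ext i j
    rw [permMat_mul_eq, Matrix.map_apply, permMat_mul_eq, Matrix.map_apply]
end

section
/- (Deterministic form of Theorem 1: a parameter is optimal for a wireless control system if and only if it is optimal for its permutation.) Let m, p, r, T be positive integers, σ a permutation of Fin m, γ ∈ ℝ, and Θ an arbitrary type of policy parameters. Let α : Θ → (ℝ^p)^m × ℝ^{m×m} → ℝ^m be a parametrized policy family with α(θ)(x ∘ σ, H^σ) = α(θ)(x, H) ∘ σ for all θ, x, H; let F : (ℝ^p)^m × ℝ^m × ℝ^{m×m} → (ℝ^p)^m satisfy F(x ∘ σ, a ∘ σ, H^σ) = F(x, a, H) ∘ σ; and let c : (ℝ^p)^m → ℝ and l : ℝ^m → ℝ^r satisfy c(x ∘ σ) = c(x) and l(a ∘ σ) = l(a). Fix x_0 ∈ (ℝ^p)^m and a sequence H_t ∈ ℝ^{m×m}. For each θ define the trajectory x_t^θ by x_0^θ = x_0, x_{t+1}^θ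 = F(x_t^θ, α(θ)(x_t^θ, H_t), H_t), and set J(θ) = Σ_{t=0}^{T} γ^t c(x_t^θ), L(θ) = Σ_{t=0}^{T} γ^t l(α(θ)(x_t^θ, H_t)); define Ĵ(θ) and L̂(θ) identically but with initial state x_0 ∘ σ and network states H_t^σ. Then θ* satisfies L(θ*) ≤ 0 componentwise and J(θ*) ≤ J(θ) for every θ with L(θ) ≤ 0, if and only if θ* satisfies L̂(θ*) ≤ 0 and Ĵ(θ*) ≤ Ĵ(θ) for every θ with L̂(θ) ≤ 0. -/
/-- The closed-loop trajectory of a wireless control system: starting from `x0`,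
`x_{t+1} = F(x_t, α(x_t, H_t), H_t)`. -/
def traj {X A Hm : Type*} (F : X → A → Hm → X) (α : X → Hm → A) (H : ℕ → Hm)
    (x0 : X) : ℕ → X
  | 0 => x0
  | t + 1 => F (traj F α H x0 t) (α (traj F α H x0 t) (H t)) (H t)

/-- Deterministic form of Theorem 1: for a permutation-equivariant parametrized policy
family `α`, a permutation-equivariant transition map `F`, and permutation-invariant
cost `c` and constraint `l`, a parameter `θ*` is optimal (feasible and cost-minimizing
among feasible parameters) for the system with initial state `x0` and network states
`H_t` if and only if it is optimal for the permuted system with initial state `x0 ∘ σ`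
and network states `H_t^σ`. -/
theorem optimal_iff_optimal_permuted {m p r T : ℕ}
    (hm : 0 < m) (hp : 0 < p) (hr : 0 < r) (hT : 0 < T)
    (σ : Equiv.Perm (Fin m)) (γ : ℝ) (Θ : Type*)
    (α : Θ → (Fin m → (Fin p → ℝ)) → Matrix (Fin m) (Fin m) ℝ → (Fin m → ℝ))
    (F : (Fin m → (Fin p → ℝ)) → (Fin m → ℝ) → Matrix (Fin m) (Fin m) ℝ →
      (Fin m → (Fin p → ℝ)))
    (hα : ∀ (θ : Θ) (x : Fin m → (Fin p → ℝ)) (H : Matrix (Fin m) (Fin m) ℝ),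
      α θ (fun i => x (σ i)) (fun i j => H (σ i) (σ j)) = fun i => α θ x H (σ i))
    (hF : ∀ (x : Fin m → (Fin p → ℝ)) (a : Fin m → ℝ) (H : Matrix (Fin m) (Fin m) ℝ),
      F (fun i => x (σ i)) (fun i => a (σ i)) (fun i j => H (σ i) (σ j))
        = fun i => F x a H (σ i))
    (c : (Fin m → (Fin p → ℝ)) → ℝ) (l : (Fin m → ℝ) → (Fin r → ℝ))
    (hc : ∀ x : Fin m → (Fin p → ℝ), c (fun i => x (σ i)) = c x)
    (hl : ∀ a : Fin m → ℝ, l (fun i => a (σ i)) = l a)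
    (x0 : Fin m → (Fin p → ℝ)) (H : ℕ → Matrix (Fin m) (Fin m) ℝ)
    (J : Θ → ℝ) (L : Θ → (Fin r → ℝ)) (Jhat : Θ → ℝ) (Lhat : Θ → (Fin r → ℝ))
    (hJ : ∀ θ, J θ = ∑ t ∈ Finset.range (T + 1),
      γ ^ t * c (traj F (α θ) H x0 t))
    (hL : ∀ θ, L θ = ∑ t ∈ Finset.range (T + 1),
      γ ^ t • l (α θ (traj F (α θ) H x0 t) (H t)))
    (hJhat : ∀ θ, Jhat θ = ∑ t ∈ Finset.range (T + 1),
      γ ^ t * c (traj F (α θ) (fun t => fun i j => H t (σ i) (σ j)) (fun i => x0 (σ i)) t))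
    (hLhat : ∀ θ, Lhat θ = ∑ t ∈ Finset.range (T + 1),
      γ ^ t • l (α θ
        (traj F (α θ) (fun t => fun i j => H t (σ i) (σ j)) (fun i => x0 (σ i)) t)
        (fun i j => H t (σ i) (σ j))))
    (θstar : Θ) :
    (L θstar ≤ 0 ∧ ∀ θ : Θ, L θ ≤ 0 → J θstar ≤ J θ)
      ↔ (Lhat θstar ≤ 0 ∧ ∀ θ : Θ, Lhat θ ≤ 0 → Jhat θstar ≤ Jhat θ) := by
  have key : ∀ (θ : Θ) (t : ℕ),
      traj F (α θ) (fun t => fun i j => H t (σ i) (σ j)) (fun i => x0 (σ i)) t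
        = fun i => traj F (α θ) H x0 t (σ i) := by
    intro θ t
    induction t with
    | zero => rfl
    | succ t ih =>
      simp only [traj]
      rw [ih, hα, hF]
  have eJ : ∀ θ, Jhat θ = J θ := by
    intro θ
    rw [hJ, hJhat]
    refine Finset.sum_congr rfl fun t _ => ?_
    rw [key, hc]
  have eL : ∀ θ, Lhat θ = L θ := by
    intro θ
    rw [hL, hLhat]
    refine Finset.sum_congr rfl fun t _ => ?_
    rw [key, hα, hl]
  simp only [eJ, eL]
end
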